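/- arXiv:2501.06560 — 2 statements merged into one kernel-verified Lean document; each statement's English description precedes it below -/
import Mathlib

section
/- Let p and q be distinct primes. The group homomorphism ℤ → ℤ_qˣ sending n to uⁿ, where u ∈ ℤ_qˣ is the unit of the q-adic integers whose underlying element is p (p is invertible in ℤ_q since q does not divide p), is injective. Consequently the diagonal homomorphism ℤ → ∏_{q ≠ p} ℤ_qˣ, n ↦ (pⁿ)_q, is injective, so the monodromy of the covering ℚˣ\𝔸 → X_ℚ over the periodic orbit C_p (given by multiplication by p on ∏_{q ≠ p} ℤ_qˣ) is nontrivial. -/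
/-- Let `p ≠ q` be primes and let `u ∈ ℤ_qˣ` be the unit of the `q`-adic
integers whose underlying element is `p`.  Then `n ↦ uⁿ` is an injective homomorphism
`ℤ → ℤ_qˣ`; consequently the diagonal homomorphism `ℤ → ∏_{q ≠ p} ℤ_qˣ`, `n ↦ (pⁿ)_q`,
is injective, so the monodromy of the covering `ℚˣ\𝔸 → X_ℚ` over the periodic orbit
`C_p` (multiplication by `p` on `∏_{q ≠ p} ℤ_qˣ`) is nontrivial. -/
instance (q : Nat.Primes) : Fact (Nat.Prime (q : ℕ)) := ⟨q.2⟩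

theorem statement5_aux (p q : ℕ) (hp : p.Prime) [hq : Fact q.Prime]
    (u : ℤ_[q]ˣ) (hu : (u : ℤ_[q]) = (p : ℤ_[q])) :
    Function.Injective (fun n : ℤ => u ^ n) := by
  rw [injective_zpow_iff_not_isOfFinOrder, isOfFinOrder_iff_pow_eq_one]
  rintro ⟨n, hn, h⟩
  have h1 : ((p ^ n : ℕ) : ℤ_[q]) = ((1 : ℕ) : ℤ_[q]) := by
    have h2 := congrArg (fun x : ℤ_[q]ˣ => (x : ℤ_[q])) h
    simpa [hu] using h2
  have h3 : p ^ n = 1 := Nat.cast_injective h1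
  exact absurd h3 (Nat.one_lt_pow hn.ne' hp.one_lt).ne'

theorem statement5 (p q : ℕ) (hp : p.Prime) [hq : Fact q.Prime] (hpq : p ≠ q)
    (u : ℤ_[q]ˣ) (hu : (u : ℤ_[q]) = (p : ℤ_[q])) :
    Function.Injective (fun n : ℤ => u ^ n) ∧
    ∀ (U : (v : {v : Nat.Primes // (v : ℕ) ≠ p}) → ℤ_[(v.1 : ℕ)]ˣ),
      (∀ v : {v : Nat.Primes // (v : ℕ) ≠ p},
        (U v : ℤ_[(v.1 : ℕ)]) = (p : ℤ_[(v.1 : ℕ)])) →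
      Function.Injective (fun n : ℤ => fun v : {v : Nat.Primes // (v : ℕ) ≠ p} => U v ^ n) := by
  refine ⟨statement5_aux p q hp u hu, fun U hU m n hmn => ?_⟩
  exact statement5_aux p q hp (U ⟨⟨q, hq.out⟩, hpq.symm⟩) (hU ⟨⟨q, hq.out⟩, hpq.symm⟩)
    (congrFun hmn ⟨⟨q, hq.out⟩, hpq.symm⟩)
end

section
/- Let T be a finite set of primes and let Γ' ⊆ ℚˣ be the subgroup generated by -1 and the primes in T. For every x = ((x_q)_{q∈T}, x_∞) with x_q ∈ ℚ_qˣ for each q ∈ T and x_∞ ∈ ℝˣ, there exists a unique γ ∈ Γ' such that γ^{-1}·x_q ∈ ℤ_qˣ for all q ∈ T (where γ^{-1} acts via the embedding of ℚ into ℚ_q) and γ^{-1}·x_∞ > 0. In other words, ∏_{q∈T} ℤ_qˣ × ℝ_{>0} is a fundamental domain for the action of Γ' on ∏_{q∈T} ℚ_qˣ × ℝˣ. -/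
def puS (q : Nat.Primes) : ℚˣ := Units.mk0 ((q : ℕ) : ℚ) (by exact_mod_cast q.2.ne_zero)

def prodS (T : Finset Nat.Primes) (n : Nat.Primes → ℤ) : ℚˣ := ∏ q ∈ T, puS q ^ n q

lemma prodS_pos (T : Finset Nat.Primes) (n : Nat.Primes → ℤ) : 0 < ((prodS T n : ℚˣ) : ℚ) := by
  unfold prodS
  rw [Units.coe_prod]
  refine Finset.prod_pos fun q _ => ?_
  rw [Units.val_zpow_eq_zpow_val]
  refine zpow_pos ?_ _
  simp only [puS, Units.val_mk0]
  exact_mod_cast q.2.pos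

lemma prodS_norm (T : Finset Nat.Primes) (n : Nat.Primes → ℤ) (q : Nat.Primes) (hq : q ∈ T) :
    ‖(((prodS T n : ℚˣ) : ℚ) : ℚ_[(q : ℕ)])‖ = ((q : ℕ) : ℝ) ^ (-n q) := by
  unfold prodS
  rw [Units.coe_prod, Rat.cast_prod, norm_prod, Finset.prod_eq_single q]
  · rw [Units.val_zpow_eq_zpow_val]
    simp [puS]
  · intro r _ hr
    rw [Units.val_zpow_eq_zpow_val]
    have h1 : ‖((r : ℕ) : ℚ_[(q : ℕ)])‖ = 1 := by
      rw [Padic.norm_natCast_eq_one_iff]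
      exact (Nat.coprime_primes q.2 r.2).2 fun h => hr (Subtype.ext h.symm)
    simp [puS, h1]
  · intro h
    exact absurd hq h

lemma prodS_struct (T : Finset Nat.Primes) (γ : ℚˣ)
    (h : γ ∈ Subgroup.closure ({-1} ∪ {γ : ℚˣ | ∃ q ∈ T, (γ : ℚ) = ((q : ℕ) : ℚ)})) :
    ∃ n, γ = prodS T n ∨ γ = - prodS T n := by
  classical
  induction h using Subgroup.closure_induction with
  | mem x hx =>
    rcases hx with hx | ⟨q, hq, hx⟩
    · refine ⟨0, Or.inr ?_⟩
      rw [Set.mem_singleton_iff.1 hx]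
      simp [prodS]
    · refine ⟨Pi.single q 1, Or.inl ?_⟩
      unfold prodS
      rw [Finset.prod_eq_single q]
      · ext; simp [puS, hx]
      · intro r _ hr
        simp [hr]
      · intro h
        exact absurd hq h
  | one => exact ⟨0, Or.inl (by simp [prodS])⟩
  | mul a b _ _ ha hb =>
    obtain ⟨n, hn⟩ := ha
    obtain ⟨m, hm⟩ := hb
    have key : prodS T (n + m) = prodS T n * prodS T m := by
      simp [prodS, zpow_add, Finset.prod_mul_distrib]
    refine ⟨n + m, ?_⟩
    rw [key]
    rcases hn with rfl | rfl <;> rcases hm with rfl | rfl <;> simp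
  | inv a _ ha =>
    obtain ⟨n, hn⟩ := ha
    have key : prodS T (-n) = (prodS T n)⁻¹ := by
      simp [prodS]
    refine ⟨-n, ?_⟩
    rw [key]
    rcases hn with rfl | rfl <;> simp [inv_neg]

lemma prodS_mem (T : Finset Nat.Primes) (n : Nat.Primes → ℤ) :
    prodS T n ∈ Subgroup.closure ({-1} ∪ {γ : ℚˣ | ∃ q ∈ T, (γ : ℚ) = ((q : ℕ) : ℚ)}) := by
  refine Subgroup.prod_mem _ fun q hq => Subgroup.zpow_mem _ (Subgroup.subset_closure ?_) _
  exact Or.inr ⟨q, hq, rfl⟩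

lemma uniqS (T : Finset Nat.Primes) (γ : ℚˣ)
    (h : γ ∈ Subgroup.closure ({-1} ∪ {γ : ℚˣ | ∃ q ∈ T, (γ : ℚ) = ((q : ℕ) : ℚ)}))
    (h1 : ∀ q ∈ T, ‖((γ : ℚ) : ℚ_[(q : ℕ)])‖ = 1) (h2 : 0 < (γ : ℚ)) : γ = 1 := by
  obtain ⟨n, hn⟩ := prodS_struct T γ h
  have hp := prodS_pos T n
  rcases hn with rfl | rfl
  · unfold prodS
    refine Finset.prod_eq_one fun q hq => ?_
    have h3 := h1 q hq
    rw [prodS_norm T n q hq, zpow_eq_one_iff_right₀ (by positivity)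
      (by exact_mod_cast q.2.one_lt.ne')] at h3
    rw [neg_eq_zero.1 h3, zpow_zero]
  · rw [Units.val_neg] at h2
    linarith

/-- Let `T` be a finite set of primes and `Γ' ⊆ ℚˣ` the subgroup
generated by `-1` and the primes in `T`.  For every `x = ((x_q)_{q∈T}, x_∞)` with
`x_q ∈ ℚ_qˣ` and `x_∞ ∈ ℝˣ` there is a unique `γ ∈ Γ'` with `γ⁻¹·x_q ∈ ℤ_qˣ` for all
`q ∈ T` (i.e. `‖γ⁻¹·x_q‖_q = 1`) and `γ⁻¹·x_∞ > 0`: the set `∏_{q∈T} ℤ_qˣ × ℝ_{>0}` is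
a fundamental domain for the action of `Γ'` on `∏_{q∈T} ℚ_qˣ × ℝˣ`. -/
theorem statement15 (T : Finset Nat.Primes) (Γ' : Subgroup ℚˣ)
    (hΓ' : Γ' = Subgroup.closure ({-1} ∪ {γ : ℚˣ | ∃ q ∈ T, (γ : ℚ) = ((q : ℕ) : ℚ)}))
    (x : ((q : T) → ℚ_[(q.1 : ℕ)]ˣ) × ℝˣ) :
    ∃! γ : ℚˣ, γ ∈ Γ' ∧
      (∀ q : T, ‖((((γ⁻¹ : ℚˣ) : ℚ) : ℚ_[(q.1 : ℕ)]) * (x.1 q : ℚ_[(q.1 : ℕ)]))‖ = 1) ∧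
      0 < (((γ⁻¹ : ℚˣ) : ℚ) : ℝ) * (x.2 : ℝ) := by
  classical
  subst hΓ'
  let n : Nat.Primes → ℤ := fun q => if h : q ∈ T then (x.1 ⟨q, h⟩ : ℚ_[(q : ℕ)]).valuation else 0
  have hx : ∀ q : T, ‖(x.1 q : ℚ_[(q.1 : ℕ)])‖ = ‖(((prodS T n : ℚˣ) : ℚ) : ℚ_[(q.1 : ℕ)])‖ := by
    rintro ⟨q, hq⟩
    rw [prodS_norm T n q hq, Padic.norm_eq_zpow_neg_valuation (Units.ne_zero _)]
    simp [n, hq]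
  have hp := prodS_pos T n
  have hpR : (0 : ℝ) < (((prodS T n : ℚˣ) : ℚ) : ℝ) := by exact_mod_cast hp
  have hm1 : (-1 : ℚˣ) ∈ Subgroup.closure
      ({-1} ∪ {γ : ℚˣ | ∃ q ∈ T, (γ : ℚ) = ((q : ℕ) : ℚ)}) :=
    Subgroup.subset_closure (Or.inl rfl)
  have hne : ∀ q : T, ‖(x.1 q : ℚ_[(q.1 : ℕ)])‖ ≠ 0 := fun q => norm_ne_zero_iff.2 (Units.ne_zero _)
  refine existsUnique_of_exists_of_unique ?_ ?_
  · rcases lt_or_gt_of_ne (Units.ne_zero x.2) with h | h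
    · refine ⟨-1 * prodS T n, Subgroup.mul_mem _ hm1 (prodS_mem T n), fun q => ?_, ?_⟩
      · have := hne q
        rw [norm_mul]
        rw [hx] at this ⊢
        simp only [neg_mul, one_mul, inv_neg, Units.val_neg, Rat.cast_neg, norm_neg,
          Units.val_inv_eq_inv_val, Rat.cast_inv, norm_inv]
        exact inv_mul_cancel₀ this
      · simp only [neg_mul, one_mul, inv_neg, Units.val_neg, Rat.cast_neg,
          Units.val_inv_eq_inv_val, Rat.cast_inv]
        have := mul_pos (inv_pos.2 hpR) (neg_pos.2 h)
        linarith
    · refine ⟨prodS T n, prodS_mem T n, fun q => ?_, ?_⟩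
      · have := hne q
        rw [norm_mul]
        rw [hx] at this ⊢
        simp only [Units.val_inv_eq_inv_val, Rat.cast_inv, norm_inv]
        exact inv_mul_cancel₀ this
      · simp only [Units.val_inv_eq_inv_val, Rat.cast_inv]
        exact mul_pos (inv_pos.2 hpR) h
  · rintro a b ⟨ha, ha1, ha2⟩ ⟨hb, hb1, hb2⟩
    rw [← inv_mul_eq_one]
    refine uniqS T _ (Subgroup.mul_mem _ (Subgroup.inv_mem _ ha) hb) (fun q hq => ?_) ?_
    · have h1 := ha1 ⟨q, hq⟩
      have h2 := hb1 ⟨q, hq⟩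
      have h3 := hne ⟨q, hq⟩
      rw [norm_mul] at h1 h2
      have h4 := mul_right_cancel₀ h3 (h1.trans h2.symm)
      simp only [Units.val_inv_eq_inv_val, Rat.cast_inv, norm_inv, Units.val_mul, Rat.cast_mul,
        norm_mul] at h4 ⊢
      rw [h4]
      refine inv_mul_cancel₀ (norm_ne_zero_iff.2 ?_)
      exact_mod_cast b.ne_zero
    · have h1 := mul_pos ha2 hb2
      have h2 : 0 < ((((a⁻¹ : ℚˣ) : ℚ) : ℝ) * (((b⁻¹ : ℚˣ) : ℚ) : ℝ)) := by
        have h3 : 0 < (x.2 : ℝ) * (x.2 : ℝ) := mul_self_pos.2 (Units.ne_zero _)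
        refine pos_of_mul_pos_left (b := (x.2 : ℝ) * (x.2 : ℝ)) ?_ h3.le
        linarith
      have h3 : 0 < (((a⁻¹ : ℚˣ) : ℚ)) * (((b⁻¹ : ℚˣ) : ℚ)) := by exact_mod_cast h2
      have h4 : 0 < (b : ℚ) * b := mul_self_pos.2 (Units.ne_zero _)
      have h5 := mul_pos h3 h4
      have hb0 := b.ne_zero
      have : ((a⁻¹ : ℚˣ) : ℚ) * ((b⁻¹ : ℚˣ) : ℚ) * ((b : ℚ) * b) = ((a⁻¹ * b : ℚˣ) : ℚ) := by
        simp only [Units.val_inv_eq_inv_val, Units.val_mul]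
        field_simp
      rwa [this] at h5
end
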